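/- arXiv:2203.03476 — 2 statements merged into one kernel-verified Lean document; each statement's English description precedes it below -/
import Mathlib

section
/- Let G be a finite simple graph and 𝔬 an orientation of G. Every matching of G, regarded as a set of directed edges of G_𝔬, is a multipath of G_𝔬; and the set of multipaths of G_𝔬 coincides with the set of matchings of G (as edge sets) if and only if 𝔬 is alternating. -/
/-!
A loopless set of directed edges is vertex-disjoint exactly when all indegrees and outdegrees
are at most one and no head of an edge is the tail of an edge; the last condition says that the
set is itself alternating, and it excludes coherent cycles. Since an orientation has no two edges
over the same undirected edge, the matchings of `G` correspond to the alternating multipaths.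

Subsets of an alternating orientation are alternating, so its multipaths are all matchings.
Conversely, an orientation that is not alternating contains a path `u → v → w`, and `u ≠ w`
because `{u, v}` has only one direction; this path is a multipath that is not alternating.
-/

/-- The indegree of `v` in a set `S` of directed edges. -/
def indegIn {V : Type*} [DecidableEq V] (S : Finset (V × V)) (v : V) : ℕ :=
  (S.filter fun e => e.2 = v).card

/-- The outdegree of `v` in a set `S` of directed edges. -/
def outdegIn {V : Type*} [DecidableEq V] (S : Finset (V × V)) (v : V) : ℕ :=
  (S.filter fun e => e.1 = v).card

/-- `D` is an orientation of the simple graph `G`: it consists of directed versions of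
edges of `G`, and each edge `{v,w}` of `G` receives exactly one of the two directions. -/
def IsOrientation {V : Type*} (G : SimpleGraph V) (D : Finset (V × V)) : Prop :=
  (∀ p ∈ D, G.Adj p.1 p.2) ∧ ∀ v w : V, G.Adj v w → ((v, w) ∈ D ↔ (w, v) ∉ D)

/-- An orientation (given as a set `D` of directed edges) is alternating if the vertex
set splits into a part where every vertex has indegree 0 and a part where every vertex
has outdegree 0. -/
def IsAlternating {V : Type*} [DecidableEq V] (D : Finset (V × V)) : Prop :=
  ∃ A : Set V, (∀ v ∈ A, indegIn D v = 0) ∧ ∀ v ∉ A, outdegIn D v = 0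

/-- `S` contains a coherently oriented cycle: a nonempty cyclic sequence of pairwise
distinct edges of `S` in which the target of each edge is the source of the next. -/
def HasCohCycle {V : Type*} (S : Finset (V × V)) : Prop :=
  ∃ (n : ℕ) (f : ZMod (n + 1) → V × V), Function.Injective f ∧
    (∀ i, f i ∈ S) ∧ ∀ i, (f i).2 = (f (i + 1)).1

/-- `S` is a multipath of the oriented graph with edge set `D`: a subset of `D` in which
every vertex has indegree and outdegree at most 1 and which contains no coherently
oriented cycle. -/
def IsMultipathIn {V : Type*} [DecidableEq V] (D S : Finset (V × V)) : Prop :=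
  S ⊆ D ∧ (∀ v : V, indegIn S v ≤ 1) ∧ (∀ v : V, outdegIn S v ≤ 1) ∧ ¬ HasCohCycle S

/-- A matching on a simple graph `G`: a set of edges of `G` that are pairwise disjoint. -/
def IsGraphMatching {V : Type*} (G : SimpleGraph V) (m : Finset (Sym2 V)) : Prop :=
  (∀ e ∈ m, e ∈ G.edgeSet) ∧
    ∀ e ∈ m, ∀ e' ∈ m, e ≠ e' → ∀ v : V, v ∈ e → v ∉ e'

/-- The set of directed edges of `D` corresponding to the (undirected) edges in `m`. -/
def dirOf {V : Type*} [DecidableEq V] (D : Finset (V × V)) (m : Finset (Sym2 V)) :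
    Finset (V × V) :=
  D.filter fun p => s(p.1, p.2) ∈ m

section

variable {V : Type*} {G : SimpleGraph V} {D S T : Finset (V × V)}

/-- Distinct directed edges in `S` share no endpoint: the matching condition, transferred to
directed edges. Two opposite edges between the same vertices are distinct, so a set containing
both is not vertex-disjoint. -/
def IsVertexDisjoint (S : Finset (V × V)) : Prop :=
  (S : Set (V × V)).PairwiseDisjoint fun p => (s(p.1, p.2) : Set V)

theorem isVertexDisjoint_iff :
    IsVertexDisjoint S ↔
      ∀ p ∈ S, ∀ q ∈ S, ∀ v, v ∈ s(p.1, p.2) → v ∈ s(q.1, q.2) → p = q := by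
  simp only [IsVertexDisjoint, Set.pairwiseDisjoint_iff, Set.Nonempty, Set.mem_inter_iff,
    SetLike.mem_coe, forall_exists_index, and_imp]

theorem IsOrientation.fst_ne_snd (hD : IsOrientation G D) {p : V × V} (hp : p ∈ D) :
    p.1 ≠ p.2 :=
  (hD.1 p hp).ne

theorem IsOrientation.swap_notMem (hD : IsOrientation G D) {p : V × V} (hp : p ∈ D) :
    p.swap ∉ D :=
  (hD.2 p.1 p.2 (hD.1 p hp)).1 hp

theorem IsOrientation.injOn_sym2Mk (hD : IsOrientation G D) :
    Set.InjOn (fun p : V × V => s(p.1, p.2)) D := by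
  intro p hp q hq hpq
  rcases Sym2.mk_eq_mk_iff.1 hpq with h | h
  · exact h
  · exact absurd (h ▸ hp) (hD.swap_notMem hq)

theorem IsOrientation.fst_ne_snd_of_snd_eq_fst (hD : IsOrientation G D) {p q : V × V}
    (hp : p ∈ D) (hq : q ∈ D) (hpq : p.2 = q.1) : p.1 ≠ q.2 := by
  intro hqp
  have hswap : p.swap = q := Prod.ext hpq hqp
  exact hD.swap_notMem hp (hswap ▸ hq)

variable [DecidableEq V]

theorem indegIn_eq_zero_iff {v : V} : indegIn S v = 0 ↔ ∀ p ∈ S, p.2 ≠ v := by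
  rw [indegIn, Finset.card_eq_zero, Finset.filter_eq_empty_iff]

theorem outdegIn_eq_zero_iff {v : V} : outdegIn S v = 0 ↔ ∀ p ∈ S, p.1 ≠ v := by
  rw [outdegIn, Finset.card_eq_zero, Finset.filter_eq_empty_iff]

theorem forall_indegIn_le_one_iff_injOn :
    (∀ v, indegIn S v ≤ 1) ↔ Set.InjOn Prod.snd (S : Set (V × V)) := by
  simp only [indegIn, Finset.card_le_one, Finset.mem_filter]
  exact ⟨fun h p hp q hq hpq => h q.2 p ⟨hp, hpq⟩ q ⟨hq, rfl⟩,
    fun h v p hp q hq => h hp.1 hq.1 (hp.2.trans hq.2.symm)⟩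

theorem forall_outdegIn_le_one_iff_injOn :
    (∀ v, outdegIn S v ≤ 1) ↔ Set.InjOn Prod.fst (S : Set (V × V)) := by
  simp only [outdegIn, Finset.card_le_one, Finset.mem_filter]
  exact ⟨fun h p hp q hq hpq => h q.1 p ⟨hp, hpq⟩ q ⟨hq, rfl⟩,
    fun h v p hp q hq => h hp.1 hq.1 (hp.2.trans hq.2.symm)⟩

theorem isMultipathIn_iff_injOn :
    IsMultipathIn D S ↔ S ⊆ D ∧ Set.InjOn Prod.snd (S : Set (V × V)) ∧
      Set.InjOn Prod.fst (S : Set (V × V)) ∧ ¬ HasCohCycle S := by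
  rw [IsMultipathIn, forall_indegIn_le_one_iff_injOn, forall_outdegIn_le_one_iff_injOn]

theorem isAlternating_iff_snd_ne_fst :
    IsAlternating S ↔ ∀ p ∈ S, ∀ q ∈ S, p.2 ≠ q.1 := by
  simp only [IsAlternating, indegIn_eq_zero_iff, outdegIn_eq_zero_iff]
  constructor
  · rintro ⟨A, hin, hout⟩ p hp q hq hpq
    by_cases hA : q.1 ∈ A
    · exact hin q.1 hA p hp hpq
    · exact hout q.1 hA q hq rfl
  · intro h
    refine ⟨{v | ∀ p ∈ S, p.2 ≠ v}, fun v hv => hv, fun v hv q hq hqv => hv fun p hp hpv => ?_⟩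
    exact h p hp q hq (hpv.trans hqv.symm)

theorem IsAlternating.mono (hT : IsAlternating T) (hST : S ⊆ T) : IsAlternating S := by
  rw [isAlternating_iff_snd_ne_fst] at hT ⊢
  exact fun p hp q hq => hT p (hST hp) q (hST hq)

theorem IsAlternating.not_hasCohCycle (hS : IsAlternating S) : ¬ HasCohCycle S := by
  rintro ⟨n, f, -, hf, hnext⟩
  exact isAlternating_iff_snd_ne_fst.1 hS (f 0) (hf 0) (f (0 + 1)) (hf (0 + 1)) (hnext 0)

theorem isVertexDisjoint_iff_injOn_and_isAlternating (hloop : ∀ p ∈ S, p.1 ≠ p.2) :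
    IsVertexDisjoint S ↔ Set.InjOn Prod.snd (S : Set (V × V)) ∧
      Set.InjOn Prod.fst (S : Set (V × V)) ∧ IsAlternating S := by
  rw [isVertexDisjoint_iff, isAlternating_iff_snd_ne_fst]
  constructor
  · intro h
    refine ⟨fun p hp q hq hpq => ?_, fun p hp q hq hpq => ?_, fun p hp q hq hpq => ?_⟩
    · exact h p hp q hq q.2 (hpq ▸ Sym2.mem_mk_right _ _) (Sym2.mem_mk_right _ _)
    · exact h p hp q hq q.1 (hpq ▸ Sym2.mem_mk_left _ _) (Sym2.mem_mk_left _ _)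
    · obtain rfl : p = q :=
        h p hp q hq q.1 (hpq ▸ Sym2.mem_mk_right _ _) (Sym2.mem_mk_left _ _)
      exact hloop p hp hpq.symm
  · rintro ⟨hsnd, hfst, halt⟩ p hp q hq v hvp hvq
    rcases Sym2.mem_iff.1 hvp with rfl | rfl <;> rcases Sym2.mem_iff.1 hvq with hpq | hpq
    · exact hfst hp hq hpq
    · exact absurd hpq.symm (halt q hq p hp)
    · exact absurd hpq (halt p hp q hq)
    · exact hsnd hp hq hpq

theorem isVertexDisjoint_dirOf {m : Finset (Sym2 V)} (hD : IsOrientation G D)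
    (hm : IsGraphMatching G m) : IsVertexDisjoint (dirOf D m) := by
  rw [isVertexDisjoint_iff]
  intro p hp q hq v hvp hvq
  obtain ⟨hpD, hpm⟩ := Finset.mem_filter.1 hp
  obtain ⟨hqD, hqm⟩ := Finset.mem_filter.1 hq
  have hedge : s(p.1, p.2) = s(q.1, q.2) :=
    by_contra fun hne => hm.2 _ hpm _ hqm hne v hvp hvq
  exact hD.injOn_sym2Mk hpD hqD hedge

theorem IsVertexDisjoint.isGraphMatching_image (hS : IsVertexDisjoint S)
    (hadj : ∀ p ∈ S, G.Adj p.1 p.2) :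
    IsGraphMatching G (S.image fun p => s(p.1, p.2)) := by
  simp only [IsGraphMatching, Finset.forall_mem_image]
  refine ⟨hadj, fun p hp q hq hne v hvp hvq => hne ?_⟩
  rw [isVertexDisjoint_iff.1 hS p hp q hq v hvp hvq]

theorem dirOf_image_sym2Mk (hD : Set.InjOn (fun p : V × V => s(p.1, p.2)) D) (hS : S ⊆ D) :
    dirOf D (S.image fun p => s(p.1, p.2)) = S := by
  ext p
  simp only [dirOf, Finset.mem_filter, Finset.mem_image]
  constructor
  · rintro ⟨hp, q, hq, hqp⟩
    exact hD (hS hq) hp hqp ▸ hq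
  · exact fun hp => ⟨hS hp, p, hp, rfl⟩

theorem exists_matching_eq_dirOf_iff_isVertexDisjoint (hD : IsOrientation G D) :
    (∃ m : Finset (Sym2 V), IsGraphMatching G m ∧ S = dirOf D m) ↔
      S ⊆ D ∧ IsVertexDisjoint S := by
  constructor
  · rintro ⟨m, hm, rfl⟩
    exact ⟨Finset.filter_subset _ _, isVertexDisjoint_dirOf hD hm⟩
  · rintro ⟨hSD, hS⟩
    exact ⟨_, hS.isGraphMatching_image fun p hp => hD.1 p (hSD hp),
      (dirOf_image_sym2Mk hD.injOn_sym2Mk hSD).symm⟩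

theorem exists_matching_eq_dirOf_iff_isMultipathIn_and_isAlternating (hD : IsOrientation G D) :
    (∃ m : Finset (Sym2 V), IsGraphMatching G m ∧ S = dirOf D m) ↔
      IsMultipathIn D S ∧ IsAlternating S := by
  rw [exists_matching_eq_dirOf_iff_isVertexDisjoint hD, isMultipathIn_iff_injOn]
  constructor
  · rintro ⟨hSD, hS⟩
    obtain ⟨hsnd, hfst, halt⟩ := (isVertexDisjoint_iff_injOn_and_isAlternating
      fun p hp => hD.fst_ne_snd (hSD hp)).1 hS
    exact ⟨⟨hSD, hsnd, hfst, halt.not_hasCohCycle⟩, halt⟩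
  · rintro ⟨⟨hSD, hsnd, hfst, -⟩, halt⟩
    exact ⟨hSD, (isVertexDisjoint_iff_injOn_and_isAlternating
      fun p hp => hD.fst_ne_snd (hSD hp)).2 ⟨hsnd, hfst, halt⟩⟩

theorem HasCohCycle.of_insert {q : V × V} (hcycle : HasCohCycle (insert q S))
    (hq : ∀ p ∈ insert q S, q.2 ≠ p.1) : HasCohCycle S := by
  obtain ⟨n, f, hinj, hf, hnext⟩ := hcycle
  have hne : ∀ i, f i ≠ q := by
    rintro i rfl
    exact hq (f (i + 1)) (hf (i + 1)) (hnext i)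
  exact ⟨n, f, hinj, fun i => (Finset.mem_insert.1 (hf i)).resolve_left (hne i), hnext⟩

theorem isMultipathIn_pair {p q : V × V} (hpD : p ∈ D) (hqD : q ∈ D) (hpq : p.2 = q.1)
    (hp : p.1 ≠ p.2) (hq : q.1 ≠ q.2) (hne : p.1 ≠ q.2) : IsMultipathIn D {q, p} := by
  have hsingleton : IsAlternating {p} := by
    simpa [isAlternating_iff_snd_ne_fst] using hp.symm
  rw [isMultipathIn_iff_injOn, Finset.coe_pair, Set.injOn_pair, Set.injOn_pair]
  refine ⟨by simp [Finset.insert_subset_iff, hpD, hqD], fun h => ?_, fun h => ?_, fun h => ?_⟩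
  · exact absurd (hpq.symm.trans h.symm) hq
  · exact absurd (h.symm.trans hpq.symm) hp
  · -- No edge of the path leaves `q.2`, so a cycle cannot use `q`.
    exact hsingleton.not_hasCohCycle (h.of_insert (by simp [hq.symm, hne.symm]))

theorem IsOrientation.isAlternating_iff_forall_isMultipathIn (hD : IsOrientation G D) :
    IsAlternating D ↔ ∀ S, IsMultipathIn D S → IsAlternating S := by
  refine ⟨fun h S hS => h.mono hS.1, fun h => ?_⟩
  rw [isAlternating_iff_snd_ne_fst]
  intro p hp q hq hpq
  have hpath : IsMultipathIn D {q, p} :=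
    isMultipathIn_pair hp hq hpq (hD.fst_ne_snd hp) (hD.fst_ne_snd hq)
      (hD.fst_ne_snd_of_snd_eq_fst hp hq hpq)
  exact isAlternating_iff_snd_ne_fst.1 (h _ hpath) p (by simp) q (by simp) hpq

end

theorem matching_dir_isMultipath_and_coincide_iff_alternating_general {V : Type*}
    [DecidableEq V] (G : SimpleGraph V) (D : Finset (V × V))
    (hD : IsOrientation G D) :
    (∀ m : Finset (Sym2 V), IsGraphMatching G m → IsMultipathIn D (dirOf D m))
      ∧ ((∀ S : Finset (V × V), IsMultipathIn D S →
            ∃ m : Finset (Sym2 V), IsGraphMatching G m ∧ S = dirOf D m)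
          ↔ IsAlternating D) := by
  have hmatching (S : Finset (V × V)) :=
    exists_matching_eq_dirOf_iff_isMultipathIn_and_isAlternating (S := S) hD
  refine ⟨fun m hm => ((hmatching (dirOf D m)).1 ⟨m, hm, rfl⟩).1, ?_⟩
  rw [hD.isAlternating_iff_forall_isMultipathIn]
  exact forall₂_congr fun S hS => (hmatching S).trans (and_iff_right hS)

/-- for a finite simple graph `G` with an orientation `D = G_𝔬`, every
matching of `G`, regarded as a set of directed edges of `G_𝔬`, is a multipath of `G_𝔬`;
and the multipaths of `G_𝔬` coincide with the matchings of `G` (as edge sets) iff `𝔬`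
is alternating. -/
theorem matching_dir_isMultipath_and_coincide_iff_alternating {V : Type*} [Fintype V]
    [DecidableEq V] (G : SimpleGraph V) (D : Finset (V × V))
    (hD : IsOrientation G D) :
    (∀ m : Finset (Sym2 V), IsGraphMatching G m → IsMultipathIn D (dirOf D m))
      ∧ ((∀ S : Finset (V × V), IsMultipathIn D S →
            ∃ m : Finset (Sym2 V), IsGraphMatching G m ∧ S = dirOf D m)
          ↔ IsAlternating D) :=
  matching_dir_isMultipath_and_coincide_iff_alternating_general G D hD
end

section
/- Let G be a finite connected simple graph whose number of edges equals its number of vertices. Then G has exactly 2 orientations in which every vertex has indegree at most 1, and they are obtained from one another by reversing the orientation of every edge of the unique cycle of G. -/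
section Indegree

variable {V : Type*} [DecidableEq V]

lemma sum_indegIn [Fintype V] (D : Finset (V × V)) : ∑ v, indegIn D v = D.card :=
  (Finset.card_eq_sum_card_fiberwise fun _ _ => Finset.mem_coe.2 (Finset.mem_univ _)).symm

lemma indegIn_eq_one_of_card_eq [Fintype V] {D : Finset (V × V)} (hcard : D.card = Fintype.card V)
    (hD : ∀ v, indegIn D v ≤ 1) (v : V) : indegIn D v = 1 := by
  have hsum : ∑ v, indegIn D v = ∑ _v : V, 1 := by
    rw [sum_indegIn, hcard, Finset.sum_const, smul_eq_mul, mul_one, Finset.card_univ]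
  exact (Finset.sum_eq_sum_iff_of_le fun v _ => hD v).1 hsum v (Finset.mem_univ v)

lemma indegIn_image_swap (D : Finset (V × V)) (v : V) :
    indegIn (D.image Prod.swap) v = outdegIn D v := by
  rw [indegIn, outdegIn, Finset.filter_image,
    Finset.card_image_of_injective _ Prod.swap_injective]
  rfl

lemma indegIn_sdiff_comm {D D' : Finset (V × V)} {v : V} (h : indegIn D v = indegIn D' v) :
    indegIn (D \ D') v = indegIn (D' \ D) v := by
  have filter_sdiff (A B : Finset (V × V)) :
      (A \ B).filter (fun e => e.2 = v) =
        A.filter (fun e => e.2 = v) \ B.filter (fun e => e.2 = v) := by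
    grind
  rw [indegIn, indegIn, filter_sdiff, filter_sdiff]
  exact Finset.card_sdiff_comm h

lemma indegIn_insert_of_notMem {D : Finset (V × V)} {e : V × V} (he : e ∉ D) (v : V) :
    indegIn (insert e D) v = indegIn D v + if e.2 = v then 1 else 0 := by
  unfold indegIn
  rw [Finset.filter_insert]
  split_ifs
  · exact Finset.card_insert_of_notMem fun h => he (Finset.mem_of_mem_filter _ h)
  · rfl

end Indegree

lemma deleteEdges_singleton_adj {V : Type*} {G : SimpleGraph V} {a b u v : V} :
    (G.deleteEdges {s(u, v)}).Adj a b ↔ G.Adj a b ∧ (a, b) ≠ (u, v) ∧ (a, b) ≠ (v, u) := by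
  simp [SimpleGraph.deleteEdges_adj]

namespace IsOrientation

variable {V : Type*} {G : SimpleGraph V} {D D' : Finset (V × V)} {u v : V}

lemma swap_notMem_s16 (hD : IsOrientation G D) (huv : (u, v) ∈ D) : (v, u) ∉ D :=
  (hD.2 u v (hD.1 _ huv)).1 huv

lemma mem_or_swap_mem (hD : IsOrientation G D) (huv : G.Adj u v) : (u, v) ∈ D ∨ (v, u) ∈ D :=
  or_iff_not_imp_right.2 (hD.2 u v huv).2

lemma card_eq_card_edgeFinset [Fintype G.edgeSet] (hD : IsOrientation G D) :
    D.card = G.edgeFinset.card := by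
  refine Finset.card_bij (fun p _ => s(p.1, p.2)) (fun p hp => by simpa using hD.1 p hp) ?_ ?_
  · intro p hp q hq hpq
    rcases Sym2.mk_eq_mk_iff.1 hpq with rfl | rfl
    · rfl
    · exact absurd hp (hD.swap_notMem_s16 hq)
  · refine Sym2.ind fun a b hab => ?_
    rcases hD.mem_or_swap_mem (by simpa using hab) with h | h
    · exact ⟨(a, b), h, rfl⟩
    · exact ⟨(b, a), h, Sym2.eq_swap⟩

lemma eq_of_subset (hD : IsOrientation G D) (hD' : IsOrientation G D') (hsub : D ⊆ D') :
    D = D' :=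
  hsub.antisymm fun p hp => (hD.mem_or_swap_mem (hD'.1 p hp)).resolve_right
    fun h => hD'.swap_notMem_s16 hp (hsub h)

variable [DecidableEq V]

lemma image_swap_sdiff (hD : IsOrientation G D) (hD' : IsOrientation G D') :
    (D \ D').image Prod.swap = D' \ D := by
  ext ⟨u, v⟩
  have hswap : (u, v) ∈ (D \ D').image Prod.swap ↔ (v, u) ∈ D \ D' :=
    Prod.swap_injective.mem_finset_image (a := (v, u))
  rw [hswap, Finset.mem_sdiff, Finset.mem_sdiff]
  constructor
  · rintro ⟨hvu, hvu'⟩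
    exact ⟨(hD'.mem_or_swap_mem (hD.1 _ hvu)).resolve_left hvu', hD.swap_notMem_s16 hvu⟩
  · rintro ⟨huv', huv⟩
    exact ⟨(hD.mem_or_swap_mem (hD'.1 _ huv')).resolve_left huv, hD'.swap_notMem_s16 huv'⟩

lemma insert_of_deleteEdges (hD : IsOrientation (G.deleteEdges {s(u, v)}) D) (huv : G.Adj u v) :
    IsOrientation G (insert (u, v) D) := by
  refine ⟨fun p hp => ?_, fun x y hxy => ?_⟩
  · rcases Finset.mem_insert.1 hp with rfl | hp
    · exact huv
    · exact (deleteEdges_singleton_adj.1 (hD.1 p hp)).1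
  · have huvD : (u, v) ∉ D := fun h => (deleteEdges_singleton_adj.1 (hD.1 _ h)).2.1 rfl
    have hvuD : (v, u) ∉ D := fun h => (deleteEdges_singleton_adj.1 (hD.1 _ h)).2.2 rfl
    have hne := huv.ne
    have hiff := hD.2 x y
    rw [deleteEdges_singleton_adj] at hiff
    grind

end IsOrientation

/-- A set of directed edges is a circulation if, taken as a flow of value `1` along each of its
members, it satisfies conservation of flow at every vertex. -/
def IsCirculation {V : Type*} [DecidableEq V] (X : Finset (V × V)) : Prop :=
  ∀ v, indegIn X v = outdegIn X v

section Circulation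

variable {V : Type*} [DecidableEq V] {G : SimpleGraph V} {D D' X : Finset (V × V)}

lemma IsCirculation.sum_comp_snd_eq_sum_comp_fst {M : Type*} [AddCommMonoid M]
    (hX : IsCirculation X) (f : V → M) : ∑ p ∈ X, f p.2 = ∑ p ∈ X, f p.1 := by
  have hends : X.val.map Prod.snd = X.val.map Prod.fst := by
    ext v
    simp only [Multiset.count_map, eq_comm (a := v)]
    exact hX v
  have hsum := congrArg (fun s => (s.map f).sum) hends
  simp only [Multiset.map_map] at hsum
  exact hsum

lemma IsCirculation.not_isBridge (hX : IsCirculation X) (hadj : ∀ p ∈ X, G.Adj p.1 p.2) {u v : V}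
    (huv : (u, v) ∈ X) (hvu : (v, u) ∉ X) : ¬ G.IsBridge s(u, v) := by
  classical
  intro hbridge
  -- The cut is given by the indicator function of the vertices reachable from `u` without the
  -- bridge; `(u, v)` is the only member of `X` crossing it.
  let side (w : V) : ℕ := if (G.deleteEdges {s(u, v)}).Reachable u w then 1 else 0
  have hside_u : side u = 1 := if_pos (SimpleGraph.Reachable.refl u)
  have hside_v : side v = 0 := if_neg (SimpleGraph.isBridge_iff.1 hbridge)
  have hside_of_ne (p : V × V) (hp : p ∈ X) (hne : p ≠ (u, v)) : side p.2 = side p.1 := by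
    have hreach := (deleteEdges_singleton_adj.2
      ⟨hadj p hp, hne, fun h => hvu (h ▸ hp)⟩).reachable
    exact if_congr ⟨fun h => h.trans hreach.symm, fun h => h.trans hreach⟩ rfl rfl
  have hlt : ∑ p ∈ X, side p.2 < ∑ p ∈ X, side p.1 := by
    have hside_lt : side v < side u := by rw [hside_u, hside_v]; exact Nat.zero_lt_one
    refine Finset.sum_lt_sum (fun p hp => ?_) ⟨(u, v), huv, hside_lt⟩
    rcases eq_or_ne p (u, v) with rfl | hne
    · exact hside_lt.le
    · exact (hside_of_ne p hp hne).le
  exact hlt.ne (hX.sum_comp_snd_eq_sum_comp_fst side)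

lemma IsOrientation.isCirculation_sdiff (hD : IsOrientation G D) (hD' : IsOrientation G D')
    (hdeg : ∀ v, indegIn D v = indegIn D' v) : IsCirculation (D \ D') := fun v => by
  rw [← indegIn_image_swap, hD.image_swap_sdiff hD', indegIn_sdiff_comm (hdeg v)]

lemma IsOrientation.mem_of_isBridge (hD : IsOrientation G D) (hD' : IsOrientation G D')
    (hdeg : ∀ v, indegIn D v = indegIn D' v) {u v : V} (huv : (u, v) ∈ D)
    (hbridge : G.IsBridge s(u, v)) : (u, v) ∈ D' := by
  by_contra huv'
  exact (hD.isCirculation_sdiff hD' hdeg).not_isBridge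
    (fun p hp => hD.1 p (Finset.sdiff_subset hp)) (Finset.mem_sdiff.2 ⟨huv, huv'⟩)
    (fun hvu => hD.swap_notMem_s16 huv (Finset.sdiff_subset hvu)) hbridge

lemma IsOrientation.eq_of_mem_of_isAcyclic_deleteEdges (hD : IsOrientation G D)
    (hD' : IsOrientation G D') (hdeg : ∀ v, indegIn D v = indegIn D' v) {a b : V}
    (hacyc : (G.deleteEdges {s(a, b)}).IsAcyclic) (hab : (a, b) ∈ D) (hab' : (a, b) ∈ D') :
    D = D' := by
  have hadj : ∀ p ∈ D \ D', (G.deleteEdges {s(a, b)}).Adj p.1 p.2 := by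
    rintro ⟨u, v⟩ huv
    obtain ⟨huvD, huvD'⟩ := Finset.mem_sdiff.1 huv
    exact deleteEdges_singleton_adj.2
      ⟨hD.1 _ huvD, fun h => huvD' (h ▸ hab'), fun h => hD.swap_notMem_s16 hab (h ▸ huvD)⟩
  refine hD.eq_of_subset hD' fun p hp => by_contra fun hp' => ?_
  have hpX : p ∈ D \ D' := Finset.mem_sdiff.2 ⟨hp, hp'⟩
  exact (hD.isCirculation_sdiff hD' hdeg).not_isBridge hadj hpX
    (fun h => hD.swap_notMem_s16 hp (Finset.sdiff_subset h))
    (SimpleGraph.isAcyclic_iff_forall_adj_isBridge.1 hacyc (hadj p hpX))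

end Circulation

open scoped Classical in
/-- The directed edges of `G` along which the distance from `r` increases. If `G` is a tree, this is
its orientation away from the root `r`; in general, edges between vertices at equal
distance from `r` are left out. -/
noncomputable def edgesAwayFrom {V : Type*} [Fintype V] (G : SimpleGraph V) (r : V) :
    Finset (V × V) :=
  {p | G.Adj p.1 p.2 ∧ G.dist r p.1 < G.dist r p.2}

section EdgesAwayFrom

variable {V : Type*} [Fintype V] {G : SimpleGraph V}

lemma mem_edgesAwayFrom {r u v : V} :
    (u, v) ∈ edgesAwayFrom G r ↔ G.Adj u v ∧ G.dist r u < G.dist r v := by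
  simp [edgesAwayFrom]

lemma isOrientation_edgesAwayFrom (hG : G.IsTree) (r : V) :
    IsOrientation G (edgesAwayFrom G r) := by
  refine ⟨fun p hp => (mem_edgesAwayFrom.1 hp).1, fun u v huv => ?_⟩
  have hne := hG.dist_ne_of_adj r huv
  simp only [mem_edgesAwayFrom, huv, huv.symm, true_and]
  omega

variable [DecidableEq V]

lemma indegIn_edgesAwayFrom_self (G : SimpleGraph V) (r : V) :
    indegIn (edgesAwayFrom G r) r = 0 := by
  refine Finset.card_eq_zero.2 (Finset.filter_eq_empty_iff.2 ?_)
  rintro ⟨u, v⟩ huv rfl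
  simpa using (mem_edgesAwayFrom.1 huv).2

lemma indegIn_edgesAwayFrom_le_one (hG : G.IsTree) (r v : V) :
    indegIn (edgesAwayFrom G r) v ≤ 1 := by
  -- Extending a shortest path from `r` to an in-neighbour of `v` gives the unique path from `r`
  -- to `v`, so the in-neighbour is its penultimate vertex.
  obtain ⟨path, -, hunique⟩ := hG.existsUnique_path r v
  have hpenultimate (u : V) (huv : (u, v) ∈ edgesAwayFrom G r) : u = path.penultimate := by
    obtain ⟨hadj, hlt⟩ := mem_edgesAwayFrom.1 huv
    obtain ⟨p, hp⟩ := hG.connected.exists_walk_length_eq_dist r u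
    have hlength : (p.concat hadj).length = G.dist r v := by
      have := hG.dist_eq_dist_add_one_of_adj r hadj
      rw [SimpleGraph.Walk.length_concat]
      omega
    rw [← hunique _ (SimpleGraph.Walk.isPath_of_length_eq_dist _ hlength),
      SimpleGraph.Walk.penultimate_concat]
  refine Finset.card_le_card (t := {(path.penultimate, v)}) fun ⟨u, w⟩ hu => ?_
  obtain ⟨huw, rfl : w = v⟩ := Finset.mem_filter.1 hu
  rw [hpenultimate u huw, Finset.mem_singleton]

end EdgesAwayFrom

/-- The free-flow orientations of `G`: those in which every vertex has indegree at most `1`. -/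
def IsFreeFlow {V : Type*} [DecidableEq V] (G : SimpleGraph V) (D : Finset (V × V)) : Prop :=
  IsOrientation G D ∧ ∀ v, indegIn D v ≤ 1

section Pseudotree

variable {V : Type*} [Fintype V] {G : SimpleGraph V} [Fintype G.edgeSet]

lemma exists_adj_not_isBridge (hconn : G.Connected)
    (hcard : Fintype.card V ≤ G.edgeFinset.card) : ∃ a b, G.Adj a b ∧ ¬ G.IsBridge s(a, b) := by
  by_contra! hbridge
  have htree : G.IsTree := ⟨hconn, SimpleGraph.isAcyclic_iff_forall_adj_isBridge.2 hbridge⟩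
  have := htree.card_edgeFinset
  omega

lemma isTree_deleteEdges_of_not_isBridge (hconn : G.Connected)
    (hcard : G.edgeFinset.card = Fintype.card V) {a b : V} (hab : G.Adj a b)
    (hnb : ¬ G.IsBridge s(a, b)) : (G.deleteEdges {s(a, b)}).IsTree := by
  refine SimpleGraph.isTree_iff_connected_and_card.2
    ⟨hconn.connected_delete_edge_of_not_isBridge hnb, ?_⟩
  rw [SimpleGraph.edgeSet_deleteEdges, Nat.card_coe_set_eq,
    Set.ncard_sdiff_singleton_add_one (by simpa using hab), Nat.card_eq_fintype_card, ← hcard,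
    ← SimpleGraph.coe_edgeFinset, Set.ncard_coe_finset]

variable [DecidableEq V]

lemma IsFreeFlow.indegIn_eq_indegIn (hcard : G.edgeFinset.card = Fintype.card V)
    {D D' : Finset (V × V)} (hD : IsFreeFlow G D) (hD' : IsFreeFlow G D') (v : V) :
    indegIn D v = indegIn D' v := by
  rw [indegIn_eq_one_of_card_eq (hD.1.card_eq_card_edgeFinset.trans hcard) hD.2,
    indegIn_eq_one_of_card_eq (hD'.1.card_eq_card_edgeFinset.trans hcard) hD'.2]

lemma IsFreeFlow.eq_of_mem_of_mem (hconn : G.Connected)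
    (hcard : G.edgeFinset.card = Fintype.card V) {D D' : Finset (V × V)} (hD : IsFreeFlow G D)
    (hD' : IsFreeFlow G D') {a b : V} (hnb : ¬ G.IsBridge s(a, b)) (hab : (a, b) ∈ D)
    (hab' : (a, b) ∈ D') : D = D' :=
  hD.1.eq_of_mem_of_isAcyclic_deleteEdges hD'.1 (hD.indegIn_eq_indegIn hcard hD')
    (isTree_deleteEdges_of_not_isBridge hconn hcard (hD.1.1 _ hab) hnb).isAcyclic hab hab'

lemma IsFreeFlow.mem_iff_isBridge (hconn : G.Connected)
    (hcard : G.edgeFinset.card = Fintype.card V) {D D' : Finset (V × V)} (hD : IsFreeFlow G D)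
    (hD' : IsFreeFlow G D') (hne : D ≠ D') {u v : V} (huv : (u, v) ∈ D) :
    (u, v) ∈ D' ↔ G.IsBridge s(u, v) :=
  ⟨fun huv' => by_contra fun hnb => hne (hD.eq_of_mem_of_mem hconn hcard hD' hnb huv huv'),
    hD.1.mem_of_isBridge hD'.1 (hD.indegIn_eq_indegIn hcard hD') huv⟩

lemma exists_isFreeFlow_mem (hconn : G.Connected) (hcard : G.edgeFinset.card = Fintype.card V)
    {a b : V} (hab : G.Adj a b) (hnb : ¬ G.IsBridge s(a, b)) :
    ∃ D, IsFreeFlow G D ∧ (a, b) ∈ D := by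
  set T := G.deleteEdges {s(a, b)}
  have hT : T.IsTree := isTree_deleteEdges_of_not_isBridge hconn hcard hab hnb
  have hnotMem : (a, b) ∉ edgesAwayFrom T b := by simp [mem_edgesAwayFrom, T]
  refine ⟨insert (a, b) (edgesAwayFrom T b),
    ⟨(isOrientation_edgesAwayFrom hT b).insert_of_deleteEdges hab, fun v => ?_⟩,
    Finset.mem_insert_self _ _⟩
  rw [indegIn_insert_of_notMem hnotMem]
  split_ifs with hv
  · rw [← hv, indegIn_edgesAwayFrom_self]
  · exact indegIn_edgesAwayFrom_le_one hT b v

end Pseudotree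

open scoped Classical in
/-- a finite connected simple graph `G` with as many edges as vertices
has exactly 2 orientations in which every vertex has indegree at most 1, and they are
obtained from one another by reversing the orientation of every edge of the unique
cycle of `G` (the edges of the unique cycle being exactly the non-bridge edges). -/
theorem pseudotree_two_freeFlow_orientations {V : Type*} [Fintype V] [DecidableEq V]
    (G : SimpleGraph V) [DecidableRel G.Adj] (hconn : G.Connected)
    (hcard : G.edgeFinset.card = Fintype.card V) :
    {D : Finset (V × V) | IsOrientation G D ∧ ∀ v : V, indegIn D v ≤ 1}.ncard = 2
      ∧ ∀ D₁ D₂ : Finset (V × V),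
          IsOrientation G D₁ → (∀ v : V, indegIn D₁ v ≤ 1) →
          IsOrientation G D₂ → (∀ v : V, indegIn D₂ v ≤ 1) → D₁ ≠ D₂ →
          D₂ = (D₁.filter fun p => G.IsBridge s(p.1, p.2)) ∪
            ((D₁.filter fun p => ¬ G.IsBridge s(p.1, p.2)).image Prod.swap) := by
  constructor
  · obtain ⟨a, b, hab, hnb⟩ := exists_adj_not_isBridge hconn hcard.ge
    have hnb' : ¬ G.IsBridge s(b, a) := Sym2.eq_swap (a := a) ▸ hnb
    obtain ⟨D, hD, habD⟩ := exists_isFreeFlow_mem hconn hcard hab hnb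
    obtain ⟨D', hD', hbaD'⟩ := exists_isFreeFlow_mem hconn hcard hab.symm hnb'
    have hne : D ≠ D' := fun h => hD.1.swap_notMem_s16 habD (h ▸ hbaD')
    refine Set.ncard_eq_two.2 ⟨D, D', hne, Set.Subset.antisymm (fun E hE => ?_) ?_⟩
    · exact (hE.1.mem_or_swap_mem hab).imp
        (IsFreeFlow.eq_of_mem_of_mem hconn hcard hE hD hnb · habD)
        (IsFreeFlow.eq_of_mem_of_mem hconn hcard hE hD' hnb' · hbaD')
    · rintro E (rfl | rfl)
      exacts [hD, hD']
  · intro D₁ D₂ hD₁ hdeg₁ hD₂ hdeg₂ hne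
    have hmem : ∀ p ∈ D₁, p ∈ D₂ ↔ G.IsBridge s(p.1, p.2) := fun _ =>
      IsFreeFlow.mem_iff_isBridge hconn hcard ⟨hD₁, hdeg₁⟩ ⟨hD₂, hdeg₂⟩ hne
    rw [← Finset.filter_congr hmem, ← Finset.filter_congr fun p hp => not_congr (hmem p hp),
      Finset.filter_mem_eq_inter, Finset.filter_notMem_eq_sdiff, hD₁.image_swap_sdiff hD₂,
      Finset.inter_comm, Finset.union_comm, Finset.sdiff_union_inter]
end
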